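/- For every prime q with q ≡ 3 (mod 4), the class number of the real quadratic field ℚ(√(2q)) is odd. -/

import Mathlib

open NumberField

/-!
Let `R = ℤ[√(2q)]`, the ring of integers of `ℚ(√(2q))`; the class number is odd as soon as an
ideal `I` of `R` with `I²` principal is itself principal.

* Write `I² = (β)`. Then `N(β) = ± N(I)²`, and the sign is `+`: a solution of `x² + n² = 2qy²` with
  `y ≠ 0` would make `2qy²` a sum of two squares with odd valuation at the prime `q ≡ 3 (mod 4)`.
* As in Hilbert's Theorem 90, `δ = β + N(I)` satisfies `δ² = tβ` with `t ∈ ℤ`. Hence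
  `(δ) = I J` with `J² = (t)`, and it is enough that `J` is principal.
* Primes of `ℤ` not dividing `8q` stay radical in `R`, so they enter `t` squared and can be removed
  from `J`. The ramified primes `2` and `q` are squares of principal ideals, so `J` is principal.
* The last fact comes from the Pell equation. If `x = 2u + 1` is the fundamental solution of
  `x² - 2qy² = 1`, then `u (u + 1) = 2q v²`, so `u = d₁a²` and `u + 1 = d₂b²` with `d₁d₂ = 2q`.
  Minimality excludes `d₂ = 1` and `a² + 1 = 2qb²` is impossible, so `2a² - qb² = ± 1` is solvable;
  then `2a + b√(2q)` has square `2ε` with `ε` a unit, and symmetrically for `q`.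
-/

/-! ### A consequence of the Pell equation -/

theorem sq_add_sq_ne_mul_sq_of_mod_four_eq_three {q c : ℕ} (hq : q.Prime) (hq4 : q % 4 = 3)
    (hc : ¬ q ∣ c) {z : ℤ} (hz : z ≠ 0) (x y : ℤ) : x ^ 2 + y ^ 2 ≠ c * q * z ^ 2 := by
  intro h
  have := Fact.mk hq
  have hc0 : c ≠ 0 := by rintro rfl; exact hc (dvd_zero q)
  have hz0 : z.natAbs ^ 2 ≠ 0 := by simpa using hz
  have hsum : c * q * z.natAbs ^ 2 = x.natAbs ^ 2 + y.natAbs ^ 2 := by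
    zify
    simp only [sq_abs, h]
  have hval : padicValNat q (c * q * z.natAbs ^ 2) = 1 + 2 * padicValNat q z.natAbs := by
    rw [padicValNat.mul (mul_ne_zero hc0 hq.ne_zero) hz0, padicValNat.mul hc0 hq.ne_zero,
      padicValNat.pow, padicValNat.eq_zero_of_not_dvd hc, padicValNat_self, zero_add]
  have hmem : q ∈ (c * q * z.natAbs ^ 2).primeFactors :=
    Nat.mem_primeFactors.2 ⟨hq, (dvd_mul_left q c).mul_right _,
      mul_ne_zero (mul_ne_zero hc0 hq.ne_zero) hz0⟩
  have heven := Nat.eq_sq_add_sq_iff.1 ⟨_, _, hsum⟩ q hmem hq4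
  rw [hval] at heven
  grind

theorem exists_mul_eq_and_eq_mul_sq_of_coprime {m n d k : ℕ} (hmn : m.Coprime n) (hd : d ≠ 0)
    (h : m * n = d * k ^ 2) :
    ∃ d₁ d₂ a b, d₁ * d₂ = d ∧ m = d₁ * a ^ 2 ∧ n = d₂ * b ^ 2 := by
  have hgcd : d.gcd m * d.gcd n = d := by
    rw [← hmn.gcd_mul, h, Nat.gcd_mul_right_right]
  obtain ⟨m', hm'⟩ := d.gcd_dvd_right m
  obtain ⟨n', hn'⟩ := d.gcd_dvd_right n
  have hsq : m' * n' = k ^ 2 := by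
    apply mul_left_cancel₀ hd
    calc d * (m' * n') = (d.gcd m * m') * (d.gcd n * n') := by nth_rw 1 [← hgcd]; ring
      _ = d * k ^ 2 := by rw [← hm', ← hn', h]
  have hcop : m'.Coprime n' :=
    hmn.of_dvd (Dvd.intro_left _ hm'.symm) (Dvd.intro_left _ hn'.symm)
  obtain ⟨a, rfl⟩ := exists_eq_pow_of_mul_eq_pow (Nat.isUnit_iff.2 hcop) hsq
  obtain ⟨b, rfl⟩ := exists_eq_pow_of_mul_eq_pow (Nat.isUnit_iff.2 hcop.symm)
    ((mul_comm _ _).trans hsq)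
  exact ⟨_, _, a, b, hgcd, hm', hn'⟩

theorem not_isSquare_of_mod_four_eq_two {d : ℤ} (hd : d % 4 = 2) : ¬ IsSquare d := by
  rintro ⟨r, rfl⟩
  rcases Int.even_or_odd' r with ⟨k, rfl | rfl⟩ <;> ring_nf at hd <;> omega

theorem exists_eq_two_mul_add_one_and_mul_succ_eq_of_pell {d : ℕ} (hd : d % 4 = 2) {x y : ℤ}
    (hx : 0 < x) (h : x ^ 2 - d * y ^ 2 = 1) :
    ∃ u v : ℕ, x = 2 * u + 1 ∧ u * (u + 1) = d * v ^ 2 := by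
  obtain ⟨e, rfl⟩ : ∃ e, d = 2 * (2 * e + 1) := ⟨d / 4, by omega⟩
  push_cast at h
  have hx_odd : Odd x := by
    by_contra hx_even
    obtain ⟨k, rfl⟩ := Int.not_odd_iff_even.1 hx_even
    have : 2 * (2 * k ^ 2 - (2 * e + 1) * y ^ 2) = 1 := by linear_combination h
    omega
  obtain ⟨u, rfl⟩ := hx_odd
  have hy_even : Even y := by
    have : 2 * (u * (u + 1)) = (2 * e + 1) * y ^ 2 := by linarith
    have : Even ((2 * e + 1) * y ^ 2) := this ▸ even_two_mul _
    have he : ¬ Even (2 * (e : ℤ) + 1) := Int.not_even_two_mul_add_one e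
    exact (Int.even_pow.1 ((Int.even_mul.1 this).resolve_left he)).1
  obtain ⟨v, rfl⟩ := hy_even
  lift u to ℕ using by omega
  refine ⟨u, v.natAbs, rfl, ?_⟩
  zify
  rw [sq_abs]
  linarith

theorem exists_mul_eq_and_mul_sq_add_one_eq_mul_sq {d : ℕ} (hd : d % 4 = 2) :
    ∃ d₁ d₂ a b : ℕ, d₁ * d₂ = d ∧ d₂ ≠ 1 ∧ d₁ * a ^ 2 + 1 = d₂ * b ^ 2 := by
  obtain ⟨s, hs⟩ := Pell.IsFundamental.exists_of_not_isSquare (d := d) (by omega)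
    (not_isSquare_of_mod_four_eq_two (by omega))
  obtain ⟨u, v, hsu, huv⟩ :=
    exists_eq_two_mul_add_one_and_mul_succ_eq_of_pell hd hs.x_pos s.prop
  obtain ⟨d₁, d₂, a, b, hd₁₂, hu, hu_succ⟩ :=
    exists_mul_eq_and_eq_mul_sq_of_coprime (Nat.coprime_self_add_right.2 (Nat.coprime_one_right u))
      (by omega) huv
  refine ⟨d₁, d₂, a, b, hd₁₂, ?_, hu ▸ hu_succ⟩
  rintro rfl
  -- `(b, a)` would be a solution of the Pell equation smaller than the fundamental one
  rw [mul_one] at hd₁₂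
  subst hd₁₂
  have hb : (b : ℤ) ^ 2 = u + 1 := by exact_mod_cast (one_mul (b ^ 2)) ▸ hu_succ.symm
  have hu' : (u : ℤ) = d₁ * a ^ 2 := by exact_mod_cast hu
  have hu_pos : 0 < (u : ℤ) := by linarith [hs.1]
  have hle : s.x ≤ b := hs.x_le_x (a := .mk b a (by linarith [hb, hu']))
    (by simp only [Pell.Solution₁.x_mk]; nlinarith [hb, hu_pos])
  nlinarith [hle, hb, hsu, hu_pos]

theorem eq_or_eq_of_mul_eq_prime_mul_prime {p q m n : ℕ} (hp : p.Prime) (hq : q.Prime)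
    (h : m * n = p * q) (hm : m ≠ 1) (hn : n ≠ 1) : (m = p ∧ n = q) ∨ (m = q ∧ n = p) := by
  rcases hp.dvd_mul.1 (Dvd.intro q h.symm) with ⟨k, rfl⟩ | ⟨k, rfl⟩
  · rw [mul_assoc] at h
    have hkn := mul_left_cancel₀ hp.ne_zero h
    obtain rfl := (hq.eq_one_or_self_of_dvd n (Dvd.intro_left k hkn)).resolve_left hn
    simp_all [hq.ne_zero]
  · rw [mul_left_comm] at h
    have hmk := mul_left_cancel₀ hp.ne_zero h
    obtain rfl := (hq.eq_one_or_self_of_dvd m (Dvd.intro k hmk)).resolve_left hm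
    simp_all [hq.ne_zero]

theorem exists_isUnit_two_mul_sq_sub_mul_sq {q : ℕ} (hq : q.Prime) (hq4 : q % 4 = 3) :
    ∃ a b : ℤ, IsUnit (2 * a ^ 2 - q * b ^ 2) := by
  obtain ⟨d₁, d₂, a, b, hd, hd₂, hab⟩ :=
    exists_mul_eq_and_mul_sq_add_one_eq_mul_sq (d := 2 * q) (by omega)
  have hab' : (d₁ * a ^ 2 + 1 : ℤ) = d₂ * b ^ 2 := by exact_mod_cast hab
  have hd₁ : d₁ ≠ 1 := by
    rintro rfl
    rw [one_mul] at hd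
    have hb : (b : ℤ) ≠ 0 := by
      rintro hb
      simp only [hb] at hab'
      nlinarith
    refine sq_add_sq_ne_mul_sq_of_mod_four_eq_three hq hq4 (c := 2) ?_ hb a 1 ?_
    · exact Nat.not_dvd_of_pos_of_lt two_pos (by have := hq.two_le; omega)
    · simpa [hd] using hab'
  obtain ⟨rfl, rfl⟩ | ⟨rfl, rfl⟩ := eq_or_eq_of_mul_eq_prime_mul_prime Nat.prime_two hq hd hd₁ hd₂
  · exact ⟨a, b, Int.isUnit_iff.2 (Or.inr (by push_cast at hab'; linarith))⟩
  · exact ⟨b, a, Int.isUnit_iff.2 (Or.inl (by push_cast at hab'; linarith))⟩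

/-! ### Primes in quadratic algebras -/

section QuadraticAlgebra

open QuadraticAlgebra

variable {A : Type*} [CommRing A]

theorem exists_associated_sq_algebraMap_of_isUnit {d m n a b : A} (hmn : m * n = d)
    (hab : IsUnit (m * a ^ 2 - n * b ^ 2)) :
    ∃ π : QuadraticAlgebra A d 0, Associated (π ^ 2) (algebraMap A _ m) := by
  subst hmn
  have hε : IsUnit (⟨m * a ^ 2 + n * b ^ 2, 2 * a * b⟩ : QuadraticAlgebra A (m * n) 0) := by
    rw [isUnit_iff_norm_isUnit]
    convert hab.pow 2 using 1
    simp only [norm_def]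
    ring
  refine ⟨⟨m * a, b⟩, (associated_mul_unit_left _ _ hε).symm.trans (.of_eq ?_) |>.symm⟩
  ext <;> simp [sq] <;> ring

theorem exists_associated_sq_algebraMap_of_dvd_mul [IsDomain A] {m n a b p : A} (hm : Prime m)
    (hn : Prime n) (hab : IsUnit (m * a ^ 2 - n * b ^ 2)) (hp : Prime p) (hpmn : p ∣ m * n) :
    ∃ π : QuadraticAlgebra A (m * n) 0, Associated (π ^ 2) (algebraMap A _ p) := by
  rcases hp.dvd_or_dvd hpmn with hpm | hpn
  · obtain ⟨π, hπ⟩ := exists_associated_sq_algebraMap_of_isUnit rfl hab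
    exact ⟨π, hπ.trans (((hp.dvd_prime_iff_associated hm).1 hpm).symm.map _)⟩
  · obtain ⟨π, hπ⟩ := exists_associated_sq_algebraMap_of_isUnit (mul_comm n m)
      (by rwa [← IsUnit.neg_iff, neg_sub])
    exact ⟨π, hπ.trans (((hp.dvd_prime_iff_associated hn).1 hpn).symm.map _)⟩

theorem eq_zero_of_norm_eq_neg_sq {q c : ℕ} (hq : q.Prime) (hq4 : q % 4 = 3) (hc : ¬ q ∣ c)
    {z : QuadraticAlgebra ℤ (c * q) 0} {n : ℤ} (hz : z.norm = -n ^ 2) : z = 0 := by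
  rw [norm_def] at hz
  have hsum : z.re ^ 2 + n ^ 2 = c * q * z.im ^ 2 := by linear_combination hz
  have him : z.im = 0 := by
    by_contra him
    exact sq_add_sq_ne_mul_sq_of_mod_four_eq_three hq hq4 hc him _ _ hsum
  have hre : z.re = 0 := by
    rw [him] at hsum
    nlinarith [sq_nonneg n]
  ext <;> assumption

theorem trace_sq_sub_four_mul_norm {a b : A} (z : QuadraticAlgebra A a b) :
    z.trace ^ 2 - 4 * z.norm = (b ^ 2 + 4 * a) * z.im ^ 2 := by
  simp only [trace_def, norm_def]
  ring

theorem isRadical_algebraMap_of_prime {a b p : A} (hp : Prime p) (hpD : ¬ p ∣ b ^ 2 + 4 * a) :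
    IsRadical (algebraMap A (QuadraticAlgebra A a b) p) := by
  rw [isRadical_iff_pow_one_lt 2 one_lt_two]
  intro z hz
  have hnorm : p ∣ z.norm := by
    obtain ⟨w, hw⟩ := hz
    refine hp.dvd_of_dvd_pow (n := 2) ⟨p * w.norm, ?_⟩
    rw [← map_pow, hw, map_mul, QuadraticAlgebra.norm_algebraMap, sq, mul_assoc]
  have htrace_smul : algebraMap A _ p ∣ z.trace • z := by
    rw [eq_add_of_sub_eq (sq_eq_trace_smul_sub_norm z).symm]
    exact hz.add (map_dvd _ hnorm)
  rw [algebraMap_dvd_iff] at htrace_smul ⊢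
  by_cases htrace : p ∣ z.trace
  · have him : p ∣ z.im := by
      have : p ∣ (b ^ 2 + 4 * a) * z.im ^ 2 :=
        trace_sq_sub_four_mul_norm z ▸ (htrace.pow two_ne_zero).sub (hnorm.mul_left 4)
      exact hp.dvd_of_dvd_pow ((hp.dvd_or_dvd this).resolve_left hpD)
    have hre : p ∣ z.re ^ 2 := by
      have : z.re ^ 2 = z.norm - (b * z.re - a * z.im) * z.im := by rw [norm_def]; ring
      exact this ▸ hnorm.sub (him.mul_left _)
    exact ⟨hp.dvd_of_dvd_pow hre, him⟩
  · exact htrace_smul.imp (fun h ↦ (hp.dvd_or_dvd h).resolve_left htrace)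
      (fun h ↦ (hp.dvd_or_dvd h).resolve_left htrace)

end QuadraticAlgebra

/-! ### Ideals whose square is generated by a scalar -/

theorem algebraMap_dvd_algebraMap_iff_of_faithfullyFlat {A R : Type*} [CommRing A] [CommRing R]
    [Algebra A R] [Module.FaithfullyFlat A R] {a b : A} :
    algebraMap A R a ∣ algebraMap A R b ↔ a ∣ b := by
  refine ⟨fun h ↦ ?_, map_dvd _⟩
  rw [← Ideal.mem_span_singleton,
    ← Ideal.comap_map_eq_self_of_faithfullyFlat (B := R) (Ideal.span {a}),
    Ideal.mem_comap, Ideal.map_span, Set.image_singleton, Ideal.mem_span_singleton]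
  exact h

theorem exists_eq_span_mul_and_sq_eq_span {R : Type*} [CommRing R] [IsDedekindDomain R]
    {J : Ideal R} {c s : R} (hc : c ≠ 0) (hJ : J ^ 2 = Ideal.span {c ^ 2 * s}) :
    ∃ J' : Ideal R, J = Ideal.span {c} * J' ∧ J' ^ 2 = Ideal.span {s} := by
  rw [← Ideal.span_singleton_mul_span_singleton, ← Ideal.span_singleton_pow] at hJ
  obtain ⟨J', rfl⟩ : Ideal.span {c} ∣ J :=
    (UniqueFactorizationMonoid.pow_dvd_pow_iff_dvd two_ne_zero).1 (Dvd.intro _ hJ.symm)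
  rw [mul_pow] at hJ
  refine ⟨J', rfl, mul_left_cancel₀ (pow_ne_zero 2 ?_) hJ⟩
  simpa using hc

section Descent

variable {A R : Type*} [CommRing A] [CommRing R] [Algebra A R] [Module.FaithfullyFlat A R]
  {t p : A} {J : Ideal R}

theorem sq_dvd_of_isRadical_algebraMap (hp : IsRadical (algebraMap A R p)) (hpt : p ∣ t)
    (hJ : J ^ 2 = Ideal.span {algebraMap A R t}) : p ^ 2 ∣ t := by
  have hJp : J ≤ Ideal.span {algebraMap A R p} := fun x hx ↦ by
    have hx_sq : algebraMap A R t ∣ x ^ 2 :=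
      Ideal.mem_span_singleton.1 (hJ ▸ Ideal.pow_mem_pow hx 2)
    exact Ideal.mem_span_singleton.2 (hp 2 x ((map_dvd _ hpt).trans hx_sq))
  have hJp_sq := Ideal.pow_right_mono hJp 2
  rwa [hJ, Ideal.span_singleton_pow, Ideal.span_singleton_le_span_singleton, ← map_pow,
    algebraMap_dvd_algebraMap_iff_of_faithfullyFlat] at hJp_sq

theorem exists_dvdNotUnit_and_span_eq_span_sq_mul [IsDomain R] (hp : Prime p)
    (hpR : IsRadical (algebraMap A R p) ∨ ∃ π, Associated (π ^ 2) (algebraMap A R p))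
    (ht : t ≠ 0) (hpt : p ∣ t) (hJ : J ^ 2 = Ideal.span {algebraMap A R t}) :
    ∃ s c, DvdNotUnit s t ∧ c ≠ 0 ∧
      Ideal.span {algebraMap A R t} = Ideal.span {c ^ 2 * algebraMap A R s} := by
  have hpR0 : algebraMap A R p ≠ 0 :=
    (map_ne_zero_iff _ (FaithfulSMul.algebraMap_injective A R)).2 hp.ne_zero
  rcases hpR with hrad | ⟨π, hπ⟩
  · obtain ⟨s, rfl⟩ := sq_dvd_of_isRadical_algebraMap hrad hpt hJ
    refine ⟨s, algebraMap A R p, ⟨right_ne_zero_of_mul ht, p ^ 2, ?_, mul_comm _ _⟩, hpR0, ?_⟩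
    · exact fun h ↦ hp.not_isUnit ((isUnit_pow_iff two_ne_zero).1 h)
    · rw [map_mul, map_pow]
  · obtain ⟨s, rfl⟩ := hpt
    refine ⟨s, π, ⟨right_ne_zero_of_mul ht, p, hp.not_isUnit, mul_comm _ _⟩, ?_, ?_⟩
    · exact ne_zero_pow two_ne_zero (hπ.ne_zero_iff.2 hpR0)
    · rw [map_mul, Ideal.span_singleton_eq_span_singleton]
      exact (hπ.mul_right _).symm

theorem isPrincipal_of_sq_eq_span_algebraMap [UniqueFactorizationMonoid A]
    [IsDedekindDomain R]
    (hprime : ∀ p : A, Prime p →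
      IsRadical (algebraMap A R p) ∨ ∃ π, Associated (π ^ 2) (algebraMap A R p))
    (ht : t ≠ 0) (hJ : J ^ 2 = Ideal.span {algebraMap A R t}) : J.IsPrincipal := by
  induction t using (wellFounded_dvdNotUnit (α := A)).induction generalizing J with
  | h t ih =>
    by_cases htu : IsUnit t
    · rw [Ideal.span_singleton_eq_top.2 (htu.map _), ← Ideal.isUnit_iff,
        isUnit_pow_iff two_ne_zero, Ideal.isUnit_iff] at hJ
      exact hJ ▸ inferInstance
    · obtain ⟨p, hp, hpt⟩ := WfDvdMonoid.exists_irreducible_factor htu ht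
      obtain ⟨s, c, hst, hc, hts⟩ := exists_dvdNotUnit_and_span_eq_span_sq_mul hp.prime
        (hprime p hp.prime) ht hpt hJ
      obtain ⟨J', rfl, hJ'⟩ := exists_eq_span_mul_and_sq_eq_span hc (hJ.trans hts)
      obtain ⟨⟨x, rfl⟩⟩ := ih s hst hst.1 hJ'
      exact ⟨c * x, Ideal.span_singleton_mul_span_singleton c x⟩

end Descent

/-! ### Ideals whose square is principal -/

theorem isPrincipal_of_mul_span_eq_span {R : Type*} [CommRing R] [IsDomain R]
    {I : Ideal R} {x y : R} (hy : y ≠ 0) (h : I * Ideal.span {x} = Ideal.span {y}) :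
    I.IsPrincipal := by
  obtain ⟨w, rfl⟩ : x ∣ y := by
    rw [← Ideal.span_singleton_le_span_singleton, ← h]
    exact Ideal.mul_le_right (I := I)
  rw [← Ideal.span_singleton_mul_span_singleton, mul_comm,
    Ideal.span_singleton_mul_right_inj (left_ne_zero_of_mul hy)] at h
  exact ⟨w, h⟩

theorem isPrincipal_of_sq_eq_span_of_sq_eq_mul {R : Type*} [CommRing R] [IsDedekindDomain R]
    {I : Ideal R} {β δ t : R} (hI : I ^ 2 = Ideal.span {β}) (hδ : δ ≠ 0) (hδ_sq : δ ^ 2 = β * t)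
    (ht : ∀ J : Ideal R, J ^ 2 = Ideal.span {t} → J.IsPrincipal) : I.IsPrincipal := by
  have hsq : Ideal.span {δ} ^ 2 = I ^ 2 * Ideal.span {t} := by
    rw [Ideal.span_singleton_pow, hδ_sq, hI, Ideal.span_singleton_mul_span_singleton]
  obtain ⟨J, hJ⟩ : I ∣ Ideal.span {δ} :=
    (UniqueFactorizationMonoid.pow_dvd_pow_iff_dvd two_ne_zero).1 (Dvd.intro _ hsq.symm)
  have hI0 : I ≠ 0 := by
    rintro rfl
    simp [hδ] at hJ
  rw [hJ, mul_pow] at hsq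
  obtain ⟨⟨x, rfl⟩⟩ := ht J (mul_left_cancel₀ (pow_ne_zero 2 hI0) hsq)
  exact isPrincipal_of_mul_span_eq_span hδ hJ.symm

section HilbertNinety

open QuadraticAlgebra

theorem exists_sq_eq_mul_algebraMap_of_norm_eq_sq {A : Type*} [CommRing A] {a b n : A}
    {z : QuadraticAlgebra A a b} (hz : z ≠ 0) (hn : z.norm = n ^ 2) :
    ∃ δ ≠ 0, ∃ t : A, δ ^ 2 = z * algebraMap A _ t := by
  by_cases hzn : z + algebraMap A _ n = 0
  · refine ⟨z, hz, -n, ?_⟩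
    rw [map_neg, ← eq_neg_of_add_eq_zero_left hzn, sq]
  · refine ⟨_, hzn, z.trace + 2 * n, ?_⟩
    have hz_sq := sq_eq_trace_smul_sub_norm z
    rw [hn, map_pow, Algebra.smul_def] at hz_sq
    simp only [map_add, map_mul, map_ofNat]
    linear_combination hz_sq

variable {a b : ℤ} [IsDedekindDomain (QuadraticAlgebra ℤ a b)]

theorem absNorm_span_singleton_eq_natAbs_norm (z : QuadraticAlgebra ℤ a b) :
    Ideal.absNorm (Ideal.span {z}) = z.norm.natAbs := by
  rw [Ideal.absNorm_span_singleton, Algebra.norm_apply, ← det_toLinearMap_eq_norm]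
  rfl

theorem isPrincipal_of_isPrincipal_sq
    (hneg : ∀ (z : QuadraticAlgebra ℤ a b) (n : ℤ), z.norm = -n ^ 2 → z = 0)
    (hram : ∀ p : ℤ, Prime p → p ∣ b ^ 2 + 4 * a →
      ∃ π : QuadraticAlgebra ℤ a b, Associated (π ^ 2) (algebraMap ℤ _ p))
    {I : Ideal (QuadraticAlgebra ℤ a b)} (hI : (I ^ 2).IsPrincipal) : I.IsPrincipal := by
  obtain ⟨⟨β, hβ⟩⟩ := hI
  rw [Ideal.submodule_span_eq] at hβ
  rcases eq_or_ne β 0 with rfl | hβ0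
  · rw [Ideal.span_singleton_zero, ← Ideal.zero_eq_bot, pow_eq_zero_iff two_ne_zero] at hβ
    exact hβ ▸ bot_isPrincipal
  have hnorm : β.norm = (Ideal.absNorm I : ℤ) ^ 2 := by
    have : β.norm.natAbs = Ideal.absNorm I ^ 2 := by
      rw [← absNorm_span_singleton_eq_natAbs_norm, ← hβ, map_pow]
    refine (Int.natAbs_eq_iff.1 this).resolve_right fun h ↦ ?_
    exact hβ0 (hneg β (Ideal.absNorm I) (mod_cast h))
  obtain ⟨δ, hδ, t, hδt⟩ := exists_sq_eq_mul_algebraMap_of_norm_eq_sq hβ0 hnorm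
  refine isPrincipal_of_sq_eq_span_of_sq_eq_mul hβ hδ hδt fun J hJ ↦ ?_
  have ht : t ≠ 0 := by
    rintro rfl
    simp [hδ] at hδt
  refine isPrincipal_of_sq_eq_span_algebraMap (fun p hp ↦ ?_) ht hJ
  by_cases hpD : p ∣ b ^ 2 + 4 * a
  · exact Or.inr (hram p hp hpD)
  · exact Or.inl (isRadical_algebraMap_of_prime hp hpD)

end HilbertNinety

/-! ### The ring of integers of a quadratic field -/

theorem exists_algebraMap_eq_of_squarefree_mul_sq {A F : Type*} [CommRing A] [IsDomain A]
    [UniqueFactorizationMonoid A] [Field F] [Algebra A F] [IsFractionRing A F] {d n : A} {r : F}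
    (hd : Squarefree d) (h : algebraMap A F d * r ^ 2 = algebraMap A F n) :
    ∃ m, algebraMap A F m = r := by
  have hd0 : algebraMap A F d ≠ 0 := by simpa using hd.ne_zero
  obtain ⟨k, hk⟩ : ∃ k, algebraMap A F k = algebraMap A F d * r := by
    refine IsIntegrallyClosed.exists_algebraMap_eq_of_isIntegral_pow two_pos ?_
    have : (algebraMap A F d * r) ^ 2 = algebraMap A F (d * n) := by
      rw [map_mul, ← h]
      ring
    exact this ▸ isIntegral_algebraMap
  have hdk : d ∣ k ^ 2 := by
    refine ⟨n, FaithfulSMul.algebraMap_injective A F ?_⟩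
    rw [map_pow, hk, map_mul, ← h]
    ring
  obtain ⟨m, rfl⟩ := hd.isRadical 2 k hdk
  exact ⟨m, mul_left_cancel₀ hd0 (by rw [← hk, map_mul])⟩

theorem even_and_even_of_four_dvd_sq_sub_mul_sq {d x y : ℤ} (hd0 : ¬ 4 ∣ d) (hd1 : d % 4 ≠ 1)
    (h : 4 ∣ x ^ 2 - d * y ^ 2) : Even x ∧ Even y := by
  obtain ⟨c, hc⟩ := h
  rcases Int.even_or_odd' x with ⟨k, rfl | rfl⟩ <;> rcases Int.even_or_odd' y with ⟨l, rfl | rfl⟩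
  · exact ⟨even_two_mul k, even_two_mul l⟩
  · exact absurd ⟨k ^ 2 - d * (l ^ 2 + l) - c, by linear_combination -hc⟩ hd0
  · have : 4 * (c - k ^ 2 - k + d * l ^ 2) = 1 := by linear_combination -hc
    omega
  · have : d = 4 * (k ^ 2 + k - d * (l ^ 2 + l) - c) + 1 := by linear_combination -hc
    omega

section RingOfIntegers

open QuadraticAlgebra

theorem isIntegral_trace_and_norm {F : Type*} [CommRing F] {a b : F} {z : QuadraticAlgebra F a b}
    (hz : IsIntegral ℤ z) : IsIntegral ℤ z.trace ∧ IsIntegral ℤ z.norm := by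
  have hz_star : IsIntegral ℤ (star z) := hz.map (starRingEnd _).toIntAlgHom
  have hinj : Function.Injective (algebraMap F (QuadraticAlgebra F a b)) := algebraMap_injective
  rw [← isIntegral_algebraMap_iff hinj, ← isIntegral_algebraMap_iff hinj,
    algebraMap_trace_eq_add_star, algebraMap_norm_eq_mul_star]
  exact ⟨hz.add hz_star, hz.mul hz_star⟩

theorem exists_eq_mk_intCast_of_isIntegral {d : ℤ} (hd : Squarefree d) (hd4 : d % 4 ≠ 1)
    {z : QuadraticAlgebra ℚ d 0} (hz : IsIntegral ℤ z) : ∃ x y : ℤ, z = ⟨x, y⟩ := by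
  obtain ⟨htrace, hnorm⟩ := isIntegral_trace_and_norm hz
  obtain ⟨T, hT⟩ := IsIntegrallyClosed.algebraMap_eq_of_integral htrace
  obtain ⟨N, hN⟩ := IsIntegrallyClosed.algebraMap_eq_of_integral hnorm
  simp only [algebraMap_int_eq, eq_intCast, trace_def, norm_def] at hT hN
  obtain ⟨S, hS⟩ := exists_algebraMap_eq_of_squarefree_mul_sq (r := 2 * z.im) (n := T ^ 2 - 4 * N)
    hd (by push_cast [algebraMap_int_eq, eq_intCast, hT, hN]; ring)
  rw [algebraMap_int_eq, eq_intCast] at hS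
  have h4 : T ^ 2 - d * S ^ 2 = 4 * N := by
    have : (T ^ 2 - d * S ^ 2 : ℚ) = 4 * N := by rw [hT, hS, hN]; ring
    exact_mod_cast this
  obtain ⟨⟨x, rfl⟩, ⟨y, rfl⟩⟩ := even_and_even_of_four_dvd_sq_sub_mul_sq
    (fun h ↦ by simpa using Int.isUnit_iff.1 (hd 2 h)) hd4 (Dvd.intro N h4.symm)
  push_cast at hT hS
  exact ⟨x, y, by ext <;> dsimp only <;> linarith⟩

theorem bijective_quadraticAlgebra_lift {F K : Type*} [Field F] [Field K] [Algebra F K] {a b : F}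
    [Fact (∀ r : F, r ^ 2 ≠ a + b * r)] (hK : Module.finrank F K = 2)
    (u : {u : K // u * u = a • 1 + b • u}) : Function.Bijective (lift u) := by
  have hinj : Function.Injective (lift u) := RingHom.injective (lift u).toRingHom
  have : FiniteDimensional F K := .of_finrank_pos (by omega)
  refine ⟨hinj, (LinearMap.injective_iff_surjective_of_finrank_eq_finrank
    (f := (lift u).toLinearMap) ?_).1 hinj⟩
  rw [finrank_eq_two, hK]

theorem algebraMap_eq_add_mul_algebraMap_omega {a b : ℤ} {K : Type*} [CommRing K]
    [Algebra (QuadraticAlgebra ℤ a b) K] (z : QuadraticAlgebra ℤ a b) :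
    algebraMap _ K z = z.re + z.im * algebraMap (QuadraticAlgebra ℤ a b) K ω := by
  rw [← z.mk_eta, mk_eq_add_smul_omega]
  simp

theorem sq_ne_intCast_of_squarefree {d : ℤ} (hd : Squarefree d) (hd1 : d ≠ 1) (r : ℚ) :
    r ^ 2 ≠ d := by
  intro hr
  have hr_int : IsIntegral ℤ (r ^ 2) := hr ▸ isIntegral_algebraMap
  obtain ⟨m, rfl⟩ := IsIntegrallyClosed.exists_algebraMap_eq_of_isIntegral_pow two_pos hr_int
  rw [eq_intCast] at hr
  have hm : m ^ 2 = d := by exact_mod_cast hr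
  have hm_unit : IsUnit m := hd m (Dvd.intro 1 (by rw [mul_one, ← sq, hm]))
  exact hd1 (by rw [← hm, Int.isUnit_sq hm_unit])

theorem isIntegralClosure_quadraticAlgebra {d : ℤ} (hd : Squarefree d) (hd4 : d % 4 ≠ 1)
    {K : Type*} [Field K] [CharZero K] (hK : Module.finrank ℚ K = 2)
    [Algebra (QuadraticAlgebra ℤ d 0) K] : IsIntegralClosure (QuadraticAlgebra ℤ d 0) ℤ K := by
  have : Fact (∀ r : ℚ, r ^ 2 ≠ d + 0 * r) :=
    ⟨fun r ↦ by simpa using sq_ne_intCast_of_squarefree hd (by rintro rfl; simp at hd4) r⟩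
  let f : QuadraticAlgebra ℚ d 0 →ₐ[ℚ] K := lift ⟨algebraMap (QuadraticAlgebra ℤ d 0) K ω, by
    rw [← map_mul, omega_mul_omega_eq_add]; simp [Algebra.smul_def]⟩
  have hf : Function.Bijective f := bijective_quadraticAlgebra_lift hK _
  have hfz (z : QuadraticAlgebra ℤ d 0) : algebraMap _ K z = f ⟨z.re, z.im⟩ := by
    rw [algebraMap_eq_add_mul_algebraMap_omega]
    refine Eq.trans ?_ (lift_apply_apply _ _).symm
    simp [Algebra.smul_def]
  refine ⟨fun z w hzw ↦ ?_, fun {x} ↦ ⟨fun hx ↦ ?_, ?_⟩⟩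
  · rw [hfz, hfz, hf.injective.eq_iff] at hzw
    ext
    · exact Int.cast_injective (congrArg re hzw)
    · exact Int.cast_injective (congrArg im hzw)
  · obtain ⟨w, rfl⟩ := hf.surjective x
    obtain ⟨x, y, rfl⟩ := exists_eq_mk_intCast_of_isIntegral hd hd4
      ((isIntegral_algHom_iff (f.restrictScalars ℤ) hf.injective).1 hx)
    exact ⟨⟨x, y⟩, hfz _⟩
  · rintro ⟨z, rfl⟩
    exact (Algebra.IsIntegral.isIntegral (R := ℤ) z).map (algebraMap _ K).toIntAlgHom

end RingOfIntegers

/-! ### Parity of the class number -/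

theorem odd_card_of_forall_sq_eq_one {G : Type*} [Group G] [Finite G]
    (h : ∀ g : G, g ^ 2 = 1 → g = 1) : Odd (Nat.card G) := by
  rw [← Nat.not_even_iff_odd, even_iff_two_dvd]
  intro h2
  have := Fact.mk Nat.prime_two
  obtain ⟨g, hg⟩ := exists_prime_orderOf_dvd_card' 2 h2
  rw [h g (hg ▸ pow_orderOf_eq_one g), orderOf_one] at hg
  exact absurd hg (by decide)

theorem odd_classNumber_of_forall_isPrincipal_of_sq {K : Type*} [Field K] [NumberField K]
    (h : ∀ I : Ideal (𝓞 K), (I ^ 2).IsPrincipal → I.IsPrincipal) : Odd (classNumber K) := by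
  rw [classNumber, ← Nat.card_eq_fintype_card]
  refine odd_card_of_forall_sq_eq_one fun g hg ↦ ?_
  obtain ⟨I, rfl⟩ := ClassGroup.mk0_surjective g
  rw [← map_pow, ClassGroup.mk0_eq_one_iff] at hg
  exact (ClassGroup.mk0_eq_one_iff _).2 (h _ hg)

theorem forall_isPrincipal_of_sq_of_ringEquiv {R S : Type*} [CommRing R] [CommRing S] (e : R ≃+* S)
    (h : ∀ I : Ideal S, (I ^ 2).IsPrincipal → I.IsPrincipal) (I : Ideal R)
    (hI : (I ^ 2).IsPrincipal) : I.IsPrincipal := by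
  have hI_map : (I.map e).IsPrincipal := h _ (Ideal.map_pow e I 2 ▸ hI.map_ringHom e)
  rw [← Ideal.comap_map_of_bijective e e.bijective (I := I), ← Ideal.map_symm]
  exact hI_map.map_ringHom e.symm

open QuadraticAlgebra in
theorem odd_classNumber_of_sq_eq_intCast {d : ℤ} (hd : Squarefree d) (hd4 : d % 4 ≠ 1)
    (hneg : ∀ (z : QuadraticAlgebra ℤ d 0) (n : ℤ), z.norm = -n ^ 2 → z = 0)
    (hram : ∀ p : ℤ, Prime p → p ∣ 4 * d →
      ∃ π : QuadraticAlgebra ℤ d 0, Associated (π ^ 2) (algebraMap ℤ _ p))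
    {K : Type*} [Field K] [NumberField K] (hK : Module.finrank ℚ K = 2)
    {α : K} (hα : α ^ 2 = d) : Odd (classNumber K) := by
  let : Algebra (QuadraticAlgebra ℤ d 0) K :=
    (lift ⟨α, by simp [← sq, hα]⟩ : QuadraticAlgebra ℤ d 0 →ₐ[ℤ] K).toRingHom.toAlgebra
  have : IsIntegralClosure (QuadraticAlgebra ℤ d 0) ℤ K :=
    isIntegralClosure_quadraticAlgebra hd hd4 hK
  have : IsDomain (QuadraticAlgebra ℤ d 0) :=
    (IsIntegralClosure.algebraMap_injective (QuadraticAlgebra ℤ d 0) ℤ K).isDomain _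
  have : IsDedekindDomain (QuadraticAlgebra ℤ d 0) := IsIntegralClosure.isDedekindDomain ℤ ℚ K _
  exact odd_classNumber_of_forall_isPrincipal_of_sq <|
    forall_isPrincipal_of_sq_of_ringEquiv (RingOfIntegers.equiv (QuadraticAlgebra ℤ d 0)) fun I ↦
      isPrincipal_of_isPrincipal_sq hneg (by simpa using hram)

/-- For every prime `q` with `q ≡ 3 (mod 4)`, the class number of the real quadratic
field `ℚ(√(2q))` (formalized as any degree-2 number field containing a square root
of `2*q`) is odd. -/
theorem odd_classNumber_of_sqrt_two_q_three_mod_four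
    (q : ℕ) (hq : q.Prime) (hq4 : q % 4 = 3)
    (K : Type) [Field K] [NumberField K]
    (hdeg : Module.finrank ℚ K = 2)
    (α : K) (hα : α ^ 2 = (2 * q : K)) :
    Odd (NumberField.classNumber K) := by
  have hcop : Nat.Coprime 2 q := (Nat.coprime_primes Nat.prime_two hq).2 (by omega)
  have hsq : Squarefree (2 * q : ℤ) := by
    exact_mod_cast Int.squarefree_natCast.2
      ((Nat.squarefree_mul hcop).2 ⟨Nat.prime_two.squarefree, hq.squarefree⟩)
  have hq_two : ¬ q ∣ 2 := Nat.not_dvd_of_pos_of_lt two_pos (hq.two_le.lt_of_ne (by omega))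
  obtain ⟨a, b, hab⟩ := exists_isUnit_two_mul_sq_sub_mul_sq hq hq4
  refine odd_classNumber_of_sq_eq_intCast hsq (by omega)
    (fun z n ↦ eq_zero_of_norm_eq_neg_sq hq hq4 hq_two) (fun p hp hpd ↦ ?_) hdeg (mod_cast hα)
  have hp_dvd : p ∣ 2 * q :=
    hp.dvd_of_dvd_pow (n := 3) (hpd.trans ⟨(q : ℤ) ^ 2, by ring⟩)
  exact exists_associated_sq_algebraMap_of_dvd_mul Int.prime_two (Nat.prime_iff_prime_int.1 hq)
    hab hp hp_dvd
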